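/- arXiv:math/9806034 — 2 statements merged into one kernel-verified Lean document; each statement's English description precedes it below -/
import Mathlib

section
/- Let l > 0, ρ₁, ρ₂ ≥ 0, and let u, v : ℝ → ℝ be twice continuously differentiable and 2l-periodic with ‖u'‖ ≤ ρ₁, ‖v'‖ ≤ ρ₁, ‖u''‖ ≤ ρ₂, ‖v''‖ ≤ ρ₂. Then with w := u - v, ∫_{-l}^{l} (u w' + w v') w dx ≤ 2 ρ₁^{1/2} ρ₂^{1/2} ‖w‖². -/
/-!
Integrating `u w w'` by parts over a period turns the left-hand side into `∫ (v' - u' / 2) w²`, so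
it suffices to bound `u'` and `v'` uniformly by `√(ρ₁ ρ₂)`. By Rolle's theorem `g := u'` has a zero
`c`; joining an arbitrary point to `c` and to `c + 2l` gives `2 g² ≤ ∫ |(g²)'| = 2 ∫ |g g'|` over
one period, and the Cauchy–Schwarz inequality bounds the last integral by `‖u'‖ ‖u''‖`.
-/

open MeasureTheory Set

theorem integral_abs_mul_le_sqrt_mul_sqrt {α : Type*} [MeasurableSpace α] {μ : Measure α}
    {f g : α → ℝ} (hf : MemLp f 2 μ) (hg : MemLp g 2 μ) :
    ∫ x, |f x * g x| ∂μ ≤ √(∫ x, f x ^ 2 ∂μ) * √(∫ x, g x ^ 2 ∂μ) := by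
  have holder := integral_mul_norm_le_Lp_mul_Lq Real.HolderConjugate.two_two
    (by simpa using hf) (by simpa using hg)
  simpa only [Real.norm_eq_abs, ← abs_mul, Real.rpow_two, sq_abs, ← Real.sqrt_eq_rpow] using holder

theorem intervalIntegral_abs_mul_le_sqrt_mul_sqrt {a b : ℝ} {f g : ℝ → ℝ} (hab : a ≤ b)
    (hf : ContinuousOn f (Icc a b)) (hg : ContinuousOn g (Icc a b)) :
    ∫ x in a..b, |f x * g x| ≤ √(∫ x in a..b, f x ^ 2) * √(∫ x in a..b, g x ^ 2) := by
  have memLp_two {h : ℝ → ℝ} (hh : ContinuousOn h (Icc a b)) :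
      MemLp h 2 (volume.restrict (Icc a b)) :=
    (memLp_two_iff_integrable_sq (hh.aestronglyMeasurable measurableSet_Icc)).2
      (hh.pow 2).integrableOn_Icc
  simpa only [intervalIntegral.integral_of_le hab, ← integral_Icc_eq_integral_Ioc] using
    integral_abs_mul_le_sqrt_mul_sqrt (memLp_two hf) (memLp_two hg)

theorem two_mul_norm_sub_le_integral_norm_deriv {E : Type*} [NormedAddCommGroup E]
    [NormedSpace ℝ E] [CompleteSpace E] {a b y : ℝ} {f f' : ℝ → E}
    (hf : ∀ x ∈ Icc a b, HasDerivAt f (f' x) x) (hf' : IntervalIntegrable f' volume a b)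
    (hfab : f a = f b) (hy : y ∈ Icc a b) :
    2 * ‖f y - f a‖ ≤ ∫ x in a..b, ‖f' x‖ := by
  have hab : a ≤ b := hy.1.trans hy.2
  have norm_sub_le {c d : ℝ} (hcd : c ≤ d) (hac : a ≤ c) (hdb : d ≤ b)
      (hint : IntervalIntegrable f' volume c d) : ‖f d - f c‖ ≤ ∫ x in c..d, ‖f' x‖ := by
    rw [← intervalIntegral.integral_eq_sub_of_hasDerivAt (fun x hx ↦ hf x ?_) hint]
    · exact intervalIntegral.norm_integral_le_integral_norm hcd
    · rw [uIcc_of_le hcd] at hx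
      exact Icc_subset_Icc hac hdb hx
  have hy' : y ∈ uIcc a b := by rwa [uIcc_of_le hab]
  have hint_left : IntervalIntegrable f' volume a y :=
    hf'.mono_set (uIcc_subset_uIcc_left hy')
  have hint_right : IntervalIntegrable f' volume y b :=
    hf'.mono_set (uIcc_subset_uIcc_right hy')
  calc 2 * ‖f y - f a‖ = ‖f y - f a‖ + ‖f b - f y‖ := by
        rw [← hfab, norm_sub_rev (f a), two_mul]
    _ ≤ (∫ x in a..y, ‖f' x‖) + ∫ x in y..b, ‖f' x‖ :=
        add_le_add (norm_sub_le hy.1 le_rfl hy.2 hint_left)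
          (norm_sub_le hy.2 hy.1 le_rfl hint_right)
    _ = ∫ x in a..b, ‖f' x‖ :=
        intervalIntegral.integral_add_adjacent_intervals hint_left.norm hint_right.norm

theorem sq_le_integral_abs_mul_deriv {a b y : ℝ} {g g' : ℝ → ℝ}
    (hg : ∀ x ∈ Icc a b, HasDerivAt g (g' x) x) (hg' : IntervalIntegrable g' volume a b)
    (hga : g a = 0) (hgb : g b = 0) (hy : y ∈ Icc a b) :
    g y ^ 2 ≤ ∫ x in a..b, |g x * g' x| := by
  have hderiv : ∀ x ∈ Icc a b, HasDerivAt (fun x ↦ g x ^ 2) (2 * (g x * g' x)) x := fun x hx ↦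
    ((hg x hx).fun_pow 2).congr_deriv (by ring)
  have hcont : ContinuousOn g (uIcc a b) := by
    rw [uIcc_of_le (hy.1.trans hy.2)]
    exact HasDerivAt.continuousOn hg
  have hint : IntervalIntegrable (fun x ↦ 2 * (g x * g' x)) volume a b :=
    (hg'.continuousOn_mul hcont).const_mul 2
  have key := two_mul_norm_sub_le_integral_norm_deriv hderiv hint (by simp only [hga, hgb]) hy
  simpa [hga, abs_mul, intervalIntegral.integral_const_mul] using key

theorem periodic_deriv {𝕜 F : Type*} [NontriviallyNormedField 𝕜] [NormedAddCommGroup F]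
    [NormedSpace 𝕜 F] {f : 𝕜 → F} {T : 𝕜} (hf : Function.Periodic f T) :
    Function.Periodic (deriv f) T := fun x ↦ by
  rw [← deriv_comp_add_const, hf.funext]

theorem exists_deriv_eq_zero_of_periodic {f : ℝ → ℝ} {T : ℝ} (hT : 0 < T) (hf : Continuous f)
    (hper : Function.Periodic f T) : ∃ c, deriv f c = 0 := by
  obtain ⟨c, -, hc⟩ := exists_deriv_eq_zero hT hf.continuousOn hper.eq.symm
  exact ⟨c, hc⟩

theorem sq_le_sqrt_integral_mul_sqrt_integral_deriv_of_periodic {g : ℝ → ℝ} {c T : ℝ}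
    (hT : 0 < T) (hg : ContDiff ℝ 1 g) (hper : Function.Periodic g T) (hc : g c = 0) (a x : ℝ) :
    g x ^ 2 ≤ √(∫ y in a..a + T, g y ^ 2) * √(∫ y in a..a + T, deriv g y ^ 2) := by
  obtain ⟨y, hy, hxy⟩ := hper.exists_mem_Ico hT x c
  have hper_abs : Function.Periodic (fun y ↦ |g y * deriv g y|) T :=
    (hper.mul (periodic_deriv hper)).comp abs
  calc g x ^ 2 = g y ^ 2 := by rw [hxy]
    _ ≤ ∫ z in c..c + T, |g z * deriv g z| :=
        sq_le_integral_abs_mul_deriv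
          (fun z _ ↦ (hg.differentiable one_ne_zero z).hasDerivAt)
          (hg.continuous_deriv_one.intervalIntegrable _ _) hc (by rw [hper, hc])
          (Ico_subset_Icc_self hy)
    _ = ∫ z in a..a + T, |g z * deriv g z| := hper_abs.intervalIntegral_add_eq c a
    _ ≤ √(∫ y in a..a + T, g y ^ 2) * √(∫ y in a..a + T, deriv g y ^ 2) :=
        intervalIntegral_abs_mul_le_sqrt_mul_sqrt (by linarith) hg.continuous.continuousOn
          hg.continuous_deriv_one.continuousOn

theorem abs_deriv_le_sqrt_mul_sqrt_of_periodic {u : ℝ → ℝ} {a T ρ₁ ρ₂ : ℝ}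
    (hT : 0 < T) (hu : ContDiff ℝ 2 u) (hper : Function.Periodic u T)
    (h₁ : √(∫ x in a..a + T, deriv u x ^ 2) ≤ ρ₁)
    (h₂ : √(∫ x in a..a + T, deriv (deriv u) x ^ 2) ≤ ρ₂) (x : ℝ) :
    |deriv u x| ≤ √ρ₁ * √ρ₂ := by
  have hρ₁ : 0 ≤ ρ₁ := (Real.sqrt_nonneg _).trans h₁
  obtain ⟨c, hc⟩ := exists_deriv_eq_zero_of_periodic hT hu.continuous hper
  rw [← Real.sqrt_mul hρ₁]
  refine Real.abs_le_sqrt ?_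
  calc deriv u x ^ 2
      ≤ √(∫ x in a..a + T, deriv u x ^ 2) * √(∫ x in a..a + T, deriv (deriv u) x ^ 2) :=
        sq_le_sqrt_integral_mul_sqrt_integral_deriv_of_periodic hT
          (hu.deriv' (n := 1)) (periodic_deriv hper) hc a x
    _ ≤ ρ₁ * ρ₂ := by gcongr

section Energy

variable {a b : ℝ} {u w h : ℝ → ℝ}

theorem integral_mul_deriv_mul_self_eq (hu : ContDiff ℝ 1 u) (hw : ContDiff ℝ 1 w)
    (huab : u a = u b) (hwab : w a = w b) :
    ∫ x in a..b, u x * deriv w x * w x = ∫ x in a..b, -(deriv u x / 2) * w x ^ 2 := by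
  have hu' := hu.continuous_deriv_one
  have hw' := hw.continuous_deriv_one
  have hsq (x : ℝ) : HasDerivAt (fun x ↦ w x ^ 2 / 2) (deriv w x * w x) x :=
    (((hw.differentiable one_ne_zero x).hasDerivAt.fun_pow 2).div_const 2).congr_deriv (by ring)
  have parts := intervalIntegral.integral_mul_deriv_eq_deriv_mul (a := a) (b := b)
    (fun x _ ↦ (hu.differentiable one_ne_zero x).hasDerivAt) (fun x _ ↦ hsq x)
    (hu'.intervalIntegrable _ _) ((hw'.mul hw.continuous).intervalIntegrable _ _)
  rw [huab, hwab, sub_self, zero_sub, ← intervalIntegral.integral_neg] at parts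
  calc ∫ x in a..b, u x * deriv w x * w x = ∫ x in a..b, u x * (deriv w x * w x) := by
        simp only [mul_assoc]
    _ = ∫ x in a..b, -(deriv u x * (w x ^ 2 / 2)) := parts
    _ = ∫ x in a..b, -(deriv u x / 2) * w x ^ 2 := by
        congr 1 with x
        ring

theorem integral_mul_deriv_add_mul_mul_self_le {K : ℝ} (hab : a ≤ b) (hu : ContDiff ℝ 1 u)
    (hw : ContDiff ℝ 1 w) (hh : Continuous h) (huab : u a = u b) (hwab : w a = w b)
    (hK : ∀ x ∈ Icc a b, h x - deriv u x / 2 ≤ K) :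
    ∫ x in a..b, (u x * deriv w x + w x * h x) * w x ≤ K * ∫ x in a..b, w x ^ 2 := by
  have integrable {f : ℝ → ℝ} (hf : Continuous f) : IntervalIntegrable f volume a b :=
    hf.intervalIntegrable a b
  calc ∫ x in a..b, (u x * deriv w x + w x * h x) * w x
      = (∫ x in a..b, u x * deriv w x * w x) + ∫ x in a..b, h x * w x ^ 2 := by
        rw [← intervalIntegral.integral_add (integrable (by fun_prop)) (integrable (by fun_prop))]
        congr 1 with x
        ring
    _ = ∫ x in a..b, (h x - deriv u x / 2) * w x ^ 2 := by
        rw [integral_mul_deriv_mul_self_eq hu hw huab hwab,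
          ← intervalIntegral.integral_add (integrable (by fun_prop)) (integrable (by fun_prop))]
        congr 1 with x
        ring
    _ ≤ ∫ x in a..b, K * w x ^ 2 :=
        intervalIntegral.integral_mono_on hab (integrable (by fun_prop)) (integrable (by fun_prop))
          fun x hx ↦ mul_le_mul_of_nonneg_right (hK x hx) (sq_nonneg _)
    _ = K * ∫ x in a..b, w x ^ 2 := intervalIntegral.integral_const_mul _ _

end Energy

/-- For `C²`, `2l`-periodic functions `u, v` with `‖u'‖, ‖v'‖ ≤ ρ₁` and `‖u''‖, ‖v''‖ ≤ ρ₂`,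
and `w := u - v`, one has `∫_I (u w' + w v') w dx ≤ 2 ρ₁^{1/2} ρ₂^{1/2} ‖w‖²`. -/
theorem nonlinear_term_estimate_with_bounds
    (l ρ₁ ρ₂ : ℝ) (hl : 0 < l) (hρ₁ : 0 ≤ ρ₁) (hρ₂ : 0 ≤ ρ₂)
    (u v : ℝ → ℝ) (hu : ContDiff ℝ 2 u) (hv : ContDiff ℝ 2 v)
    (hup : ∀ x : ℝ, u (x + 2 * l) = u x)
    (hvp : ∀ x : ℝ, v (x + 2 * l) = v x)
    (hu1 : Real.sqrt (∫ x in (-l)..l, (deriv u x) ^ 2) ≤ ρ₁)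
    (hv1 : Real.sqrt (∫ x in (-l)..l, (deriv v x) ^ 2) ≤ ρ₁)
    (hu2 : Real.sqrt (∫ x in (-l)..l, (deriv (deriv u) x) ^ 2) ≤ ρ₂)
    (hv2 : Real.sqrt (∫ x in (-l)..l, (deriv (deriv v) x) ^ 2) ≤ ρ₂) :
    (∫ x in (-l)..l,
        (u x * deriv (fun y => u y - v y) x + (u x - v x) * deriv v x) * (u x - v x))
      ≤ 2 * Real.sqrt ρ₁ * Real.sqrt ρ₂ * ∫ x in (-l)..l, (u x - v x) ^ 2 := by
  have period_end : -l + 2 * l = l := by ring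
  have abs_deriv_le {f : ℝ → ℝ} (hf : ContDiff ℝ 2 f) (hper : Function.Periodic f (2 * l))
      (h₁ : √(∫ x in (-l)..l, deriv f x ^ 2) ≤ ρ₁)
      (h₂ : √(∫ x in (-l)..l, deriv (deriv f) x ^ 2) ≤ ρ₂) (x : ℝ) :
      |deriv f x| ≤ √ρ₁ * √ρ₂ :=
    abs_deriv_le_sqrt_mul_sqrt_of_periodic (a := -l) (by positivity) hf hper
      (by rwa [period_end]) (by rwa [period_end]) x
  have hu_endpoints : u (-l) = u l := by rw [← hup (-l), period_end]
  have hv_endpoints : v (-l) = v l := by rw [← hvp (-l), period_end]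
  have hu_C1 : ContDiff ℝ 1 u := hu.of_le one_le_two
  have hv_C1 : ContDiff ℝ 1 v := hv.of_le one_le_two
  refine integral_mul_deriv_add_mul_mul_self_le (by linarith) hu_C1 (hu_C1.sub hv_C1)
    hv_C1.continuous_deriv_one hu_endpoints (by rw [hu_endpoints, hv_endpoints]) fun x _ ↦ ?_
  have hu' := neg_le_of_abs_le (abs_deriv_le hu hup hu1 hu2 x)
  have hv' := le_of_abs_le (abs_deriv_le hv hvp hv1 hv2 x)
  have bound_nonneg : 0 ≤ √ρ₁ * √ρ₂ := by positivity
  linarith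
end

section
/- Let l > 0, 0 ≤ α ≤ 1, ρ ≥ 0, and let w : ℝ → ℝ be three times continuously differentiable and 2l-periodic with ‖w'‖ ≤ ρ. Then α ∫_{-l}^{l} H(w''')(x) w(x) dx = -α ∫_{-l}^{l} H(w'')(x) w'(x) dx ≤ α² ρ² + (1/4) ‖w''‖², where H denotes the periodic Hilbert transform on 2l-periodic functions. -/
/-- `Hf` is the periodic Hilbert transform of the `2l`-periodic function `f`: the `k`-th
Fourier coefficient of `Hf` on `(-l, l)` (w.r.t. the basis `e^{i k π x / l}`) equals
`i·sgn(k)` times that of `f`, where `sgn(0) = 0`. -/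
def IsPeriodicHilbertPair (l : ℝ) (hl : 0 < l) (f Hf : ℝ → ℝ) : Prop :=
  ∀ k : ℤ, fourierCoeffOn (show (-l : ℝ) < l by linarith) (fun x => (Hf x : ℂ)) k
    = Complex.I * (Int.sign k : ℂ) *
        fourierCoeffOn (show (-l : ℝ) < l by linarith) (fun x => (f x : ℂ)) k

/-!
On the Fourier side `∫ H(f) g` is, up to the length of the interval, `∑ₖ ĝ(k) · i sgn(-k) f̂(-k)`.
Differentiation multiplies the `k`-th coefficient by `2πik / (2l)`, so moving one derivative from
`f` to `g` only changes the sign of every term. As `|i sgn k| ≤ 1`, Cauchy–Schwarz and Parseval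
give `|∫ H(f) g| ≤ ‖f‖ ‖g‖`; the estimate is then `|α| ‖w'‖ ‖w''‖ ≤ α² ‖w'‖² + ‖w''‖² / 4`.

A Hilbert pair does not say that `Hf` is integrable. If it is not, its Fourier coefficients all take
the junk value `0`, which forces the nonzero frequencies of `f`, and hence those of `w`, to vanish.
The series identity for `∫ H(f) g` survives because it needs no integrability for constant `g`.
-/

open MeasureTheory Set
open scoped Interval ENNReal

theorem neg_mul_le_sq_mul_sq_add_of_abs_le {x ρ y : ℝ} (α : ℝ) (hx : |x| ≤ ρ * y) :
    -(α * x) ≤ α ^ 2 * ρ ^ 2 + 1 / 4 * y ^ 2 :=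
  calc -(α * x) ≤ |α| * |x| := abs_mul α x ▸ neg_le_abs _
    _ ≤ |α| * (ρ * y) := mul_le_mul_of_nonneg_left hx (abs_nonneg α)
    _ ≤ |α| ^ 2 * ρ ^ 2 + 1 / 4 * y ^ 2 := by linarith [sq_nonneg (|α| * ρ - y / 2)]
    _ = α ^ 2 * ρ ^ 2 + 1 / 4 * y ^ 2 := by rw [sq_abs]

theorem memLp_restrict_of_continuousOn_isCompact {X E : Type*} [TopologicalSpace X]
    [T2Space X] [MeasurableSpace X] [OpensMeasurableSpace X] [NormedAddCommGroup E]
    {μ : Measure X} [IsFiniteMeasureOnCompacts μ] {f : X → E} {s : Set X}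
    (hf : ContinuousOn f s) (hs : IsCompact s) (p : ℝ≥0∞) : MemLp f p (μ.restrict s) := by
  have : IsFiniteMeasure (μ.restrict s) := isFiniteMeasure_restrict.2 hs.measure_lt_top.ne
  obtain ⟨C, hC⟩ := hs.exists_bound_of_continuousOn hf
  exact .of_bound (hf.aestronglyMeasurable_of_isCompact hs hs.measurableSet) C
    (ae_restrict_of_forall_mem hs.measurableSet hC)

theorem memLp_restrict_Ioc_of_continuousOn {E : Type*} [NormedAddCommGroup E] {f : ℝ → E}
    {a b : ℝ} (hf : ContinuousOn f [[a, b]]) (p : ℝ≥0∞) : MemLp f p (volume.restrict (Ioc a b)) :=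
  (memLp_restrict_of_continuousOn_isCompact hf isCompact_uIcc p).mono_measure
    (Measure.restrict_mono_set _ (Ioc_subset_Icc_self.trans Icc_subset_uIcc))

theorem exists_hasSum_mul_le_sqrt_mul_sqrt {ι : Type*} {u v : ι → ℝ} {A B : ℝ} (hu : ∀ i, 0 ≤ u i)
    (hv : ∀ i, 0 ≤ v i) (hA : HasSum (fun i => u i ^ 2) A) (hB : HasSum (fun i => v i ^ 2) B) :
    ∃ C ≤ √A * √B, HasSum (fun i => u i * v i) C := by
  rw [← Real.sq_sqrt (hA.nonneg fun _ => sq_nonneg _)] at hA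
  rw [← Real.sq_sqrt (hB.nonneg fun _ => sq_nonneg _)] at hB
  obtain ⟨C, -, hC, hsum⟩ := Real.inner_le_Lp_mul_Lq_hasSum_of_nonneg .two_two
    (Real.sqrt_nonneg A) (Real.sqrt_nonneg B) hu hv (by simpa only [Real.rpow_two] using hA)
    (by simpa only [Real.rpow_two] using hB)
  exact ⟨C, hC, hsum⟩

theorem norm_I_mul_sign_le_one (k : ℤ) : ‖Complex.I * (k.sign : ℂ)‖ ≤ 1 := by
  rcases Int.sign_trichotomy k with h | h | h <;> simp [h]

section FourierCoeffOn

variable {a b : ℝ} (hab : a < b) {g h : ℝ → ℂ}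

theorem fourierCoeffOn_zero (h : ℝ → ℂ) :
    fourierCoeffOn hab h 0 = (b - a)⁻¹ • ∫ x in a..b, h x := by
  simp [fourierCoeffOn_eq_integral]

theorem fourierCoeffOn_eq_zero_of_not_intervalIntegrable
    (hh : ¬ IntervalIntegrable h volume a b) (k : ℤ) : fourierCoeffOn hab h k = 0 := by
  rw [fourierCoeffOn_eq_integral, intervalIntegral.integral_undef, smul_zero]
  refine mt (fun hk => ?_) hh
  have hcont : Continuous fun x : ℝ => fourier k (x : AddCircle (b - a)) := by fun_prop
  refine (hk.continuousOn_mul hcont.continuousOn).congr fun x _ => ?_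
  simp only [smul_eq_mul, ← mul_assoc, ← fourier_add, add_neg_cancel, fourier_zero, one_mul]

theorem hasSum_fourierCoeffOn_mul_fourier (hg : ContinuousOn g [[a, b]]) (hgab : g a = g b)
    (hsum : Summable (fourierCoeffOn hab g)) {x : ℝ} (hx : x ∈ Ioc a b) :
    HasSum (fun k : ℤ => fourierCoeffOn hab g k * fourier k (x : AddCircle (b - a))) (g x) := by
  have : Fact (0 < b - a) := ⟨sub_pos.2 hab⟩
  have hcont : Continuous (AddCircle.liftIoc (b - a) a g) :=
    AddCircle.liftIoc_continuous (by rwa [add_sub_cancel])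
      (by rwa [add_sub_cancel, ← uIcc_of_le hab.le])
  have hlift : AddCircle.liftIoc (b - a) a g (x : AddCircle (b - a)) = g x :=
    AddCircle.liftIoc_coe_apply (by rwa [add_sub_cancel])
  rw [← hlift]
  exact has_pointwise_sum_fourier_series_of_summable
    (f := (⟨_, hcont⟩ : C(AddCircle (b - a), ℂ))) hsum x

theorem eq_fourierCoeffOn_zero_of_forall_ne_zero (hg : ContinuousOn g [[a, b]]) (hgab : g a = g b)
    (hzero : ∀ k ≠ 0, fourierCoeffOn hab g k = 0) {x : ℝ} (hx : x ∈ Ioc a b) :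
    g x = fourierCoeffOn hab g 0 := by
  have hsum : Summable (fourierCoeffOn hab g) :=
    summable_of_ne_finset_zero (s := {0}) fun k hk => hzero k (by simpa using hk)
  have hsingle := hasSum_single (f := fun k : ℤ => fourierCoeffOn hab g k *
    fourier k (x : AddCircle (b - a))) 0 fun k hk => by rw [hzero k hk, zero_mul]
  simpa using (hasSum_fourierCoeffOn_mul_fourier hab hg hgab hsum hx).unique hsingle

theorem hasSum_fourierCoeffOn_mul_fourierCoeffOn_neg (hg : ContinuousOn g [[a, b]])
    (hgab : g a = g b) (hsum : Summable (fourierCoeffOn hab g))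
    (hh : IntervalIntegrable h volume a b) :
    HasSum (fun k : ℤ => fourierCoeffOn hab g k * fourierCoeffOn hab h (-k))
      ((b - a)⁻¹ • ∫ x in a..b, h x * g x) := by
  have hseries : HasSum
      (fun k => ∫ x in a..b, fourierCoeffOn hab g k * (fourier k (x : AddCircle (b - a)) * h x))
      (∫ x in a..b, h x * g x) := by
    refine intervalIntegral.hasSum_integral_of_dominated_convergence
      (fun k x => ‖fourierCoeffOn hab g k‖ * ‖h x‖) (fun k => ?_)
      (fun k => .of_forall fun x _ => ?_) (.of_forall fun x _ => hsum.norm.mul_right _) ?_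
      (.of_forall fun x hx => ?_)
    · have hcont : Continuous fun x : ℝ => fourier k (x : AddCircle (b - a)) := by fun_prop
      exact (hcont.aestronglyMeasurable.mul hh.def'.aestronglyMeasurable).const_mul _
    · rw [norm_mul, norm_mul, fourier_apply, Circle.norm_coe, one_mul]
    · simp_rw [tsum_mul_right]
      exact hh.norm.const_mul _
    · rw [uIoc_of_le hab.le] at hx
      refine ((hasSum_fourierCoeffOn_mul_fourier hab hg hgab hsum hx).mul_left (h x)).congr_fun ?_
      intro k
      ring
  convert hseries.const_smul (b - a)⁻¹ using 2 with k
  rw [fourierCoeffOn_eq_integral h, neg_neg, intervalIntegral.integral_const_mul, mul_smul_comm,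
    one_div]
  rfl

theorem hasSum_fourierCoeffOn_mul_fourierCoeffOn_neg_of_forall_ne_zero
    (hg : ContinuousOn g [[a, b]]) (hgab : g a = g b)
    (hzero : ∀ k ≠ 0, fourierCoeffOn hab g k = 0) :
    HasSum (fun k : ℤ => fourierCoeffOn hab g k * fourierCoeffOn hab h (-k))
      ((b - a)⁻¹ • ∫ x in a..b, h x * g x) := by
  have hint : ∫ x in a..b, h x * g x = ∫ x in a..b, h x * fourierCoeffOn hab g 0 := by
    refine intervalIntegral.integral_congr_ae (.of_forall fun x hx => ?_)
    rw [uIoc_of_le hab.le] at hx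
    rw [eq_fourierCoeffOn_zero_of_forall_ne_zero hab hg hgab hzero hx]
  rw [hint, intervalIntegral.integral_mul_const, ← smul_mul_assoc, ← fourierCoeffOn_zero hab,
    mul_comm]
  simpa using hasSum_single (f := fun k : ℤ => fourierCoeffOn hab g k * fourierCoeffOn hab h (-k)) 0
    fun k hk => by rw [hzero k hk, zero_mul]

theorem hasSum_sq_fourierCoeffOn_ofReal {f : ℝ → ℝ}
    (hf : MemLp f 2 (volume.restrict (Ioc a b))) :
    HasSum (fun k => ‖fourierCoeffOn hab (fun x => (f x : ℂ)) k‖ ^ 2)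
      ((b - a)⁻¹ * ∫ x in a..b, f x ^ 2) := by
  simpa using hasSum_sq_fourierCoeffOn hab (f := fun x => (f x : ℂ)) hf.ofReal

end FourierCoeffOn

/-- `f` is continuously differentiable on `[a, b]` with derivative `f'` and takes the same value at
both endpoints, so that integrating by parts over `[a, b]` leaves no boundary term. The values of
`f'` at the endpoints are not required to agree. -/
structure HasPeriodicDerivOn {E : Type*} [NormedAddCommGroup E] [NormedSpace ℝ E]
    (f f' : ℝ → E) (a b : ℝ) : Prop where
  hasDerivAt : ∀ x ∈ [[a, b]], HasDerivAt f (f' x) x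
  continuousOn_deriv : ContinuousOn f' [[a, b]]
  eq_endpoints : f a = f b

namespace HasPeriodicDerivOn

variable {a b : ℝ}

theorem ofReal {f f' : ℝ → ℝ} (hf : HasPeriodicDerivOn f f' a b) :
    HasPeriodicDerivOn (fun x => (f x : ℂ)) (fun x => (f' x : ℂ)) a b where
  hasDerivAt x hx := (hf.hasDerivAt x hx).ofReal_comp
  continuousOn_deriv := Complex.continuous_ofReal.comp_continuousOn hf.continuousOn_deriv
  eq_endpoints := congrArg _ hf.eq_endpoints

theorem continuousOn {E : Type*} [NormedAddCommGroup E] [NormedSpace ℝ E] {f f' : ℝ → E}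
    (hf : HasPeriodicDerivOn f f' a b) : ContinuousOn f [[a, b]] :=
  fun x hx => (hf.hasDerivAt x hx).continuousAt.continuousWithinAt

theorem iteratedDeriv_of_contDiff {E : Type*} [NormedAddCommGroup E] [NormedSpace ℝ E]
    {w : ℝ → E} {n : ℕ} (hw : ContDiff ℝ (n + 1) w) (hper : Function.Periodic w (b - a)) :
    HasPeriodicDerivOn (iteratedDeriv n w) (iteratedDeriv (n + 1) w) a b where
  hasDerivAt x _ := by
    rw [iteratedDeriv_succ]
    exact (hw.differentiable_iteratedDeriv n (mod_cast n.lt_succ_self) x).hasDerivAt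
  continuousOn_deriv := (hw.continuous_iteratedDeriv (n + 1) le_rfl).continuousOn
  eq_endpoints := by
    have hshift := congrFun (iteratedDeriv_comp_add_const n w (b - a)) a
    rwa [funext hper, add_sub_cancel] at hshift

variable {f f' : ℝ → ℂ}

theorem fourierCoeffOn_deriv (hf : HasPeriodicDerivOn f f' a b) (hab : a < b) (k : ℤ) :
    fourierCoeffOn hab f' k = 2 * Real.pi * Complex.I * k / (b - a) * fourierCoeffOn hab f k := by
  have hint : IntervalIntegrable f' volume a b := hf.continuousOn_deriv.intervalIntegrable
  rcases eq_or_ne k 0 with rfl | hk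
  · rw [fourierCoeffOn_zero, intervalIntegral.integral_eq_sub_of_hasDerivAt hf.hasDerivAt hint,
      hf.eq_endpoints]
    simp
  · have hba : (b - a : ℂ) ≠ 0 := by exact_mod_cast (sub_pos.2 hab).ne'
    have hpi : (Real.pi : ℂ) ≠ 0 := by exact_mod_cast Real.pi_ne_zero
    have hk' : (k : ℂ) ≠ 0 := by exact_mod_cast hk
    rw [fourierCoeffOn_of_hasDerivAt hab hk hf.hasDerivAt hint, hf.eq_endpoints]
    field_simp
    simp

theorem fourierCoeffOn_deriv_eq_zero_iff (hf : HasPeriodicDerivOn f f' a b) (hab : a < b)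
    {k : ℤ} (hk : k ≠ 0) :
    fourierCoeffOn hab f' k = 0 ↔ fourierCoeffOn hab f k = 0 := by
  have hba : (b - a : ℂ) ≠ 0 := by exact_mod_cast (sub_pos.2 hab).ne'
  simp [hf.fourierCoeffOn_deriv hab, hk, hba]

theorem summable_fourierCoeffOn (hf : HasPeriodicDerivOn f f' a b) (hab : a < b) :
    Summable (fourierCoeffOn hab f) := by
  have hderiv : Summable fun k : ℤ => ‖fourierCoeffOn hab f' k‖ ^ (2 : ℝ) := by
    simpa using (hasSum_sq_fourierCoeffOn hab
      (memLp_restrict_Ioc_of_continuousOn hf.continuousOn_deriv 2)).summable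
  have hinv : Summable fun k : ℤ => |1 / (k : ℝ)| ^ (2 : ℝ) := by
    simpa using Real.summable_one_div_int_pow.2 one_lt_two
  have hprod : Summable fun k : ℤ => ‖fourierCoeffOn hab f' k‖ * |1 / (k : ℝ)| :=
    Real.summable_mul_of_Lp_Lq_of_nonneg .two_two (fun _ => norm_nonneg _)
      (fun _ => abs_nonneg _) hderiv hinv
  refine .of_norm_bounded_eventually (hprod.mul_left ((b - a) / (2 * Real.pi))) ?_
  filter_upwards [(finite_singleton (0 : ℤ)).eventually_cofinite_notMem] with k hk
  have hk' : |(k : ℝ)| ≠ 0 := by simpa using hk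
  have hba : 0 < b - a := sub_pos.2 hab
  have hnorm : ‖(b - a : ℂ)‖ = b - a := by
    rw [← Complex.ofReal_sub, Complex.norm_real, Real.norm_of_nonneg hba.le]
  refine le_of_eq ?_
  rw [hf.fourierCoeffOn_deriv hab]
  simp only [norm_mul, norm_div, hnorm, Complex.norm_ofNat, Complex.norm_real, Complex.norm_I,
    Complex.norm_intCast, Real.norm_of_nonneg Real.pi_pos.le, abs_div, abs_one]
  field_simp

end HasPeriodicDerivOn

namespace IsPeriodicHilbertPair

variable {l : ℝ} {hl : 0 < l} {f Hf g g' : ℝ → ℝ}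

theorem intervalIntegrable_or_forall_fourierCoeffOn_eq_zero (hH : IsPeriodicHilbertPair l hl f Hf) :
    IntervalIntegrable (fun x => (Hf x : ℂ)) volume (-l) l ∨
      ∀ k ≠ 0, fourierCoeffOn (neg_lt_self hl) (fun x => (f x : ℂ)) k = 0 := by
  refine or_iff_not_imp_left.2 fun hint k hk => ?_
  have hHk := hH k
  rw [fourierCoeffOn_eq_zero_of_not_intervalIntegrable _ hint] at hHk
  simpa [hk] using hHk.symm

theorem hasSum_integral_mul (hH : IsPeriodicHilbertPair l hl f Hf)
    (hg : HasPeriodicDerivOn g g' (-l) l)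
    (hfg : ∀ k ≠ 0, fourierCoeffOn (neg_lt_self hl) (fun x => (f x : ℂ)) k = 0 →
      fourierCoeffOn (neg_lt_self hl) (fun x => (g x : ℂ)) k = 0) :
    HasSum (fun k : ℤ => fourierCoeffOn (neg_lt_self hl) (fun x => (g x : ℂ)) k *
        (Complex.I * ((-k).sign : ℂ) *
          fourierCoeffOn (neg_lt_self hl) (fun x => (f x : ℂ)) (-k)))
      (((l - -l)⁻¹ * ∫ x in (-l)..l, Hf x * g x : ℝ) : ℂ) := by
  have hpair : HasSum (fun k : ℤ => fourierCoeffOn (neg_lt_self hl) (fun x => (g x : ℂ)) k *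
      fourierCoeffOn (neg_lt_self hl) (fun x => (Hf x : ℂ)) (-k))
      ((l - -l)⁻¹ • ∫ x in (-l)..l, (Hf x : ℂ) * (g x : ℂ)) := by
    rcases hH.intervalIntegrable_or_forall_fourierCoeffOn_eq_zero with hint | hzero
    · exact hasSum_fourierCoeffOn_mul_fourierCoeffOn_neg _ hg.ofReal.continuousOn
        hg.ofReal.eq_endpoints (hg.ofReal.summable_fourierCoeffOn _) hint
    · exact hasSum_fourierCoeffOn_mul_fourierCoeffOn_neg_of_forall_ne_zero _
        hg.ofReal.continuousOn hg.ofReal.eq_endpoints fun k hk => hfg k hk (hzero k hk)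
  simp_rw [← Complex.ofReal_mul, intervalIntegral.integral_ofReal, Complex.real_smul,
    ← Complex.ofReal_mul] at hpair
  exact hpair.congr_fun fun k => by rw [hH (-k)]

theorem integral_deriv_mul {f' Hf' g'' : ℝ → ℝ} (hH : IsPeriodicHilbertPair l hl f Hf)
    (hH' : IsPeriodicHilbertPair l hl f' Hf') (hf : HasPeriodicDerivOn f f' (-l) l)
    (hg : HasPeriodicDerivOn g g' (-l) l) (hg' : HasPeriodicDerivOn g' g'' (-l) l)
    (hfg : ∀ k ≠ 0, fourierCoeffOn (neg_lt_self hl) (fun x => (f x : ℂ)) k = 0 →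
      fourierCoeffOn (neg_lt_self hl) (fun x => (g x : ℂ)) k = 0) :
    ∫ x in (-l)..l, Hf' x * g x = -∫ x in (-l)..l, Hf x * g' x := by
  have hsum' := hH'.hasSum_integral_mul hg fun k hk hzero =>
    hfg k hk ((hf.ofReal.fourierCoeffOn_deriv_eq_zero_iff _ hk).1 hzero)
  have hsum := hH.hasSum_integral_mul hg' fun k hk hzero =>
    (hg.ofReal.fourierCoeffOn_deriv_eq_zero_iff _ hk).2 (hfg k hk hzero)
  have heq := hsum'.unique (hsum.neg.congr_fun fun k => by
    rw [hf.ofReal.fourierCoeffOn_deriv, hg.ofReal.fourierCoeffOn_deriv]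
    push_cast
    ring)
  rw [← Complex.ofReal_neg, Complex.ofReal_inj, ← mul_neg] at heq
  exact mul_left_cancel₀ (inv_ne_zero (sub_pos.2 (neg_lt_self hl)).ne') heq

theorem abs_integral_mul_le (hH : IsPeriodicHilbertPair l hl f Hf)
    (hf : MemLp f 2 (volume.restrict (Ioc (-l) l))) (hg : HasPeriodicDerivOn g g' (-l) l)
    (hfg : ∀ k ≠ 0, fourierCoeffOn (neg_lt_self hl) (fun x => (f x : ℂ)) k = 0 →
      fourierCoeffOn (neg_lt_self hl) (fun x => (g x : ℂ)) k = 0) :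
    |∫ x in (-l)..l, Hf x * g x| ≤
      √(∫ x in (-l)..l, g x ^ 2) * √(∫ x in (-l)..l, f x ^ 2) := by
  have hT : 0 < l - -l := sub_pos.2 (neg_lt_self hl)
  have hfsq := (Equiv.neg ℤ).hasSum_iff.2 (hasSum_sq_fourierCoeffOn_ofReal (neg_lt_self hl) hf)
  have hgsq := hasSum_sq_fourierCoeffOn_ofReal (neg_lt_self hl)
    (memLp_restrict_Ioc_of_continuousOn hg.continuousOn 2)
  obtain ⟨C, hC, hCsum⟩ := exists_hasSum_mul_le_sqrt_mul_sqrt (fun _ => norm_nonneg _)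
    (fun _ => norm_nonneg _) hgsq hfsq
  have hle := ((hH.hasSum_integral_mul hg hfg).norm_le_of_bounded hCsum fun k => ?_).trans hC
  · rw [Complex.norm_real, Real.norm_eq_abs, abs_mul, abs_of_pos (inv_pos.2 hT),
      Real.sqrt_mul (inv_nonneg.2 hT.le), Real.sqrt_mul (inv_nonneg.2 hT.le), mul_mul_mul_comm,
      Real.mul_self_sqrt (inv_nonneg.2 hT.le)] at hle
    exact le_of_mul_le_mul_left hle (inv_pos.2 hT)
  · rw [norm_mul, norm_mul]
    gcongr
    exact mul_le_of_le_one_left (norm_nonneg _) (norm_I_mul_sign_le_one _)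

end IsPeriodicHilbertPair

theorem hilbert_term_estimate_general
    (l α ρ : ℝ) (hl : 0 < l) (w H3 H2 : ℝ → ℝ) (hw : ContDiff ℝ 3 w)
    (hper : ∀ x : ℝ, w (x + 2 * l) = w x)
    (hH3 : IsPeriodicHilbertPair l hl (iteratedDeriv 3 w) H3)
    (hH2 : IsPeriodicHilbertPair l hl (iteratedDeriv 2 w) H2)
    (hw1 : Real.sqrt (∫ x in (-l)..l, (deriv w x) ^ 2) ≤ ρ) :
    α * (∫ x in (-l)..l, H3 x * w x) = -(α * ∫ x in (-l)..l, H2 x * deriv w x) ∧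
    -(α * ∫ x in (-l)..l, H2 x * deriv w x)
      ≤ α ^ 2 * ρ ^ 2 + (1 / 4) * ∫ x in (-l)..l, (iteratedDeriv 2 w x) ^ 2 := by
  have hper' : Function.Periodic w (l - -l) := by
    rwa [sub_neg_eq_add, ← two_mul]
  have hd0 : HasPeriodicDerivOn w (deriv w) (-l) l := by
    simpa using HasPeriodicDerivOn.iteratedDeriv_of_contDiff (n := 0) (hw.of_le (by norm_num)) hper'
  have hd1 : HasPeriodicDerivOn (deriv w) (iteratedDeriv 2 w) (-l) l := by
    simpa using HasPeriodicDerivOn.iteratedDeriv_of_contDiff (n := 1) (hw.of_le (by norm_num)) hper'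
  have hd2 : HasPeriodicDerivOn (iteratedDeriv 2 w) (iteratedDeriv 3 w) (-l) l :=
    .iteratedDeriv_of_contDiff (n := 2) (hw.of_le (by norm_num)) hper'
  have hparts : ∫ x in (-l)..l, H3 x * w x = -∫ x in (-l)..l, H2 x * deriv w x :=
    hH2.integral_deriv_mul hH3 hd2 hd0 hd1 fun k hk hzero =>
      (hd0.ofReal.fourierCoeffOn_deriv_eq_zero_iff _ hk).1
        ((hd1.ofReal.fourierCoeffOn_deriv_eq_zero_iff _ hk).1 hzero)
  have hcs := hH2.abs_integral_mul_le
    (memLp_restrict_Ioc_of_continuousOn hd2.continuousOn 2) hd1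
    fun k hk => (hd1.ofReal.fourierCoeffOn_deriv_eq_zero_iff _ hk).1
  refine ⟨by rw [hparts, mul_neg], ?_⟩
  have hbound := neg_mul_le_sq_mul_sq_add_of_abs_le α
    (hcs.trans (mul_le_mul_of_nonneg_right hw1 (Real.sqrt_nonneg _)))
  rwa [Real.sq_sqrt (intervalIntegral.integral_nonneg (neg_lt_self hl).le
    fun _ _ => sq_nonneg _)] at hbound

/-- For `0 ≤ α ≤ 1` and a `C³`, `2l`-periodic function `w` with `‖w'‖ ≤ ρ`,
`α ∫_I H(w''') w dx = -α ∫_I H(w'') w' dx ≤ α² ρ² + (1/4) ‖w''‖²`,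
where `H` is the periodic Hilbert transform and `‖·‖` the `L²` norm on `I = (-l, l)`. -/
theorem hilbert_term_estimate
    (l α ρ : ℝ) (hl : 0 < l) (hα0 : 0 ≤ α) (hα1 : α ≤ 1) (hρ : 0 ≤ ρ)
    (w H3 H2 : ℝ → ℝ) (hw : ContDiff ℝ 3 w)
    (hper : ∀ x : ℝ, w (x + 2 * l) = w x)
    (hH3per : ∀ x : ℝ, H3 (x + 2 * l) = H3 x)
    (hH2per : ∀ x : ℝ, H2 (x + 2 * l) = H2 x)
    (hH3 : IsPeriodicHilbertPair l hl (iteratedDeriv 3 w) H3)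
    (hH2 : IsPeriodicHilbertPair l hl (iteratedDeriv 2 w) H2)
    (hw1 : Real.sqrt (∫ x in (-l)..l, (deriv w x) ^ 2) ≤ ρ) :
    α * (∫ x in (-l)..l, H3 x * w x) = -(α * ∫ x in (-l)..l, H2 x * deriv w x) ∧
    -(α * ∫ x in (-l)..l, H2 x * deriv w x)
      ≤ α ^ 2 * ρ ^ 2 + (1 / 4) * ∫ x in (-l)..l, (iteratedDeriv 2 w x) ^ 2 := by
  exact hilbert_term_estimate_general l α ρ hl w H3 H2 hw hper hH3 hH2 hw1
end
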